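/- Let G be a group, H a normal subgroup of G, Γ = G/H the quotient group, and f : G → Γ the canonical homomorphism. Let k be an infinite cardinal, {N_α}_{α<k} a G-invariant k-small system on G, and S a G-invariant k-additive algebra of subsets of G which is admissible with respect to {N_α}_{α<k}. Assume H ∈ S and that for every set E ⊆ G the saturation HE belongs to S. Define S' = {Y ⊆ Γ : f⁻¹(Y) ∈ S} and, for each α<k, N'_α = {Y ⊆ Γ : f⁻¹(Y) ∈ N_α}. Then S' is admissible with respect to {N'_α}_{α<k}; that is, for every α<k: S' \ N'_α ≠ ∅ and S' ∩ N'_α ≠ ∅; every F ∈ N'_α is contained in some B ∈ N'_α ∩ S'; and every family of pairwise disjoint sets from S' \ N'_α has cardinality at most k. -/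

import Mathlib

open Set Pointwise

universe u

/-- A class of subsets of a group `G` is `G`-invariant if it is closed under
left translations `A ↦ g • A = {g * x : x ∈ A}`. -/
def GInvariant {G : Type u} [Group G] (C : Set (Set G)) : Prop :=
  ∀ g : G, ∀ A ∈ C, g • A ∈ C

/-- A class of subsets is `k`-additive if it is closed under unions of
at most `k` of its members. -/
def kAdditive {G : Type u} (k : Cardinal.{u}) (C : Set (Set G)) : Prop :=
  ∀ (ι : Type u) (f : ι → Set G), Cardinal.mk ι ≤ k → (∀ i, f i ∈ C) → (⋃ i, f i) ∈ C

/-- An algebra of subsets: contains `∅`, closed under complements and finite unions. -/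
structure IsSetAlgebra {G : Type u} (S : Set (Set G)) : Prop where
  empty_mem : ∅ ∈ S
  compl_mem : ∀ A ∈ S, Aᶜ ∈ S
  union_mem : ∀ A ∈ S, ∀ B ∈ S, A ∪ B ∈ S

/-- `N_∞ = ⋂_{α<k} N_α`. -/
def NInf {G : Type u} (k : Cardinal.{u}) (N : Ordinal.{u} → Set (Set G)) : Set (Set G) :=
  {A | ∀ α < k.ord, A ∈ N α}

/-- A `G`-invariant `k`-small system on `G` (Definition 1.2). -/
structure SmallSystem {G : Type u} [Group G] (k : Cardinal.{u})
    (N : Ordinal.{u} → Set (Set G)) : Prop where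
  nonempty : ∀ α < k.ord, (N α).Nonempty
  empty_mem : ∀ α < k.ord, (∅ : Set G) ∈ N α
  invariant : ∀ α < k.ord, GInvariant (N α)
  downward : ∀ α < k.ord, ∀ E ∈ N α, ∀ F, F ⊆ E → F ∈ N α
  union_ninf : ∀ α < k.ord, ∀ E ∈ N α, ∀ F ∈ NInf k N, E ∪ F ∈ N α
  union_tail : ∀ α < k.ord, ∃ αs, α < αs ∧ αs < k.ord ∧
    ∀ (T : Set Ordinal.{u}) (E : Ordinal.{u} → Set G),
      (∀ β ∈ T, αs < β ∧ β < k.ord) → Set.InjOn E T →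
      (∀ β ∈ T, E β ∈ N β) → (⋃ β ∈ T, E β) ∈ N α
  directed : ∀ α < k.ord, ∀ β < k.ord, ∃ γ, α < γ ∧ β < γ ∧ γ < k.ord ∧
    N γ ⊆ N α ∧ N γ ⊆ N β

/-- Admissibility of a `G`-invariant `k`-additive algebra with respect to a
`k`-small system (Definition 1.3). -/
def Admissible {G : Type u} [Group G] (k : Cardinal.{u}) (S : Set (Set G))
    (N : Ordinal.{u} → Set (Set G)) : Prop :=
  ∀ α < k.ord,
    (S \ N α).Nonempty ∧ (S ∩ N α).Nonempty ∧
    (∀ E ∈ N α, ∃ F ∈ N α ∩ S, E ⊆ F) ∧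
    (∀ D : Set (Set G), D ⊆ S \ N α → D.PairwiseDisjoint id → Cardinal.mk D ≤ k)

/-- The smallest `G`-invariant `k`-additive algebra of subsets of `G`
containing the class `B`. -/
def genInvAlgebra {G : Type u} [Group G] (k : Cardinal.{u}) (B : Set (Set G)) : Set (Set G) :=
  {A | ∀ T : Set (Set G), B ⊆ T → IsSetAlgebra T → kAdditive k T → GInvariant T → A ∈ T}

/-!
To cover a set `Y` whose preimage under `f` is small, first cover `f ⁻¹' Y` by a small set `F` of
the algebra, then pass to the `f`-saturated core of `F`, the union of the fibres contained in `F`: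
it is still small, and it lies in the algebra because its complement is the saturation
`f ⁻¹' (f '' Fᶜ)`. Preimages of disjoint sets are disjoint, and those outside `N α` are nonempty,
hence distinct, so the bound on disjoint families carries over as well.
-/

theorem injOn_of_pairwiseDisjoint_of_ne_bot {ι α : Type*} [PartialOrder α] [OrderBot α]
    {s : Set ι} {g : ι → α} (hs : s.PairwiseDisjoint g) (hg : ∀ i ∈ s, g i ≠ ⊥) : InjOn g s :=
  fun i hi _ hj hij => hs.elim hi hj fun hdisj => hg i hi (hdisj.eq_bot_of_le hij.le)

theorem mk_le_of_pairwiseDisjoint_of_mapsTo {ι α : Type u} [PartialOrder α] [OrderBot α]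
    {k : Cardinal.{u}} {C : Set α} (hbot : ⊥ ∉ C)
    (hC : ∀ D ⊆ C, D.PairwiseDisjoint id → Cardinal.mk D ≤ k)
    {s : Set ι} {g : ι → α} (hs : s.PairwiseDisjoint g) (hg : MapsTo g s C) :
    Cardinal.mk s ≤ k := by
  have hinj : InjOn g s :=
    injOn_of_pairwiseDisjoint_of_ne_bot hs fun i hi => ne_of_mem_of_not_mem (hg hi) hbot
  rw [← Cardinal.mk_image_eq_of_injOn g s hinj]
  exact hC _ hg.image_subset (hinj.pairwiseDisjoint_image.mpr hs)

namespace IsSetAlgebra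

variable {X : Type u} {S : Set (Set X)}

theorem univ_mem (hS : IsSetAlgebra S) : univ ∈ S := by
  simpa using hS.compl_mem ∅ hS.empty_mem

theorem preimage_kernImage_mem {Y : Type*} {f : X → Y} (hS : IsSetAlgebra S)
    (hsat : ∀ A ∈ S, f ⁻¹' (f '' A) ∈ S) {A : Set X} (hA : A ∈ S) : f ⁻¹' kernImage f A ∈ S := by
  rw [kernImage_eq_compl, preimage_compl]
  exact hS.compl_mem _ (hsat _ (hS.compl_mem A hA))

end IsSetAlgebra

theorem exists_superset_preimage_mem {X : Type u} {Y : Type*} {f : X → Y} {S I : Set (Set X)}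
    (hS : IsSetAlgebra S) (hI : IsLowerSet I) (hsat : ∀ A ∈ S, f ⁻¹' (f '' A) ∈ S)
    (hcov : ∀ E ∈ I, ∃ F ∈ I ∩ S, E ⊆ F) {E : Set Y} (hE : f ⁻¹' E ∈ I) :
    ∃ B, (f ⁻¹' B ∈ I ∧ f ⁻¹' B ∈ S) ∧ E ⊆ B := by
  obtain ⟨F, ⟨hFI, hFS⟩, hEF⟩ := hcov _ hE
  have hcore : f ⁻¹' kernImage f F ⊆ F := subset_kernImage_iff.mp Subset.rfl
  exact ⟨kernImage f F, ⟨hI hcore hFI, hS.preimage_kernImage_mem hsat hFS⟩,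
    subset_kernImage_iff.mpr hEF⟩

theorem quotient_admissible_general {G Γ : Type u} [Group G] [Group Γ] (f : G → Γ)
    {k : Cardinal.{u}} {N : Ordinal.{u} → Set (Set G)} {S : Set (Set G)}
    (hN : ∀ α < k.ord, IsLowerSet (N α)) (hS : IsSetAlgebra S)
    (hsat : ∀ A ∈ S, f ⁻¹' (f '' A) ∈ S) (hAdm : Admissible k S N) :
    Admissible k {Y : Set Γ | f ⁻¹' Y ∈ S} (fun α => {Y : Set Γ | f ⁻¹' Y ∈ N α}) := by
  intro α hα
  obtain ⟨⟨A, -, hA⟩, ⟨B, -, hB⟩, hcov, hdisj⟩ := hAdm α hα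
  have huniv : univ ∉ N α := fun h => hA (hN α hα (subset_univ A) h)
  have hempty : ∅ ∈ N α := hN α hα (empty_subset B) hB
  refine ⟨⟨univ, hS.univ_mem, huniv⟩, ⟨∅, hS.empty_mem, hempty⟩, fun E hE => ?_,
    fun D hD hDdisj => ?_⟩
  · exact exists_superset_preimage_mem hS (hN α hα) hsat hcov hE
  · have hpre : D.PairwiseDisjoint (preimage f) :=
      fun Y hY Z hZ hYZ => (hDdisj hY hZ hYZ).preimage f
    exact mk_le_of_pairwiseDisjoint_of_mapsTo (fun h => h.2 hempty) hdisj hpre hD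

theorem preimage_image_mk_eq_subgroup_mul {G : Type*} [Group G] (H : Subgroup G) [H.Normal]
    (A : Set G) : (QuotientGroup.mk : G → G ⧸ H) ⁻¹' (QuotientGroup.mk '' A) = H * A := by
  rw [QuotientGroup.preimage_image_mk_eq_mul, Subgroup.set_mul_normal_comm]

/-- If `S` is admissible with respect to the `G`-invariant `k`-small system
`{N_α}_{α<k}`, `H ∈ S` is a normal subgroup and all saturations `H * E` belong
to `S`, then `S' = {Y ⊆ G/H : f⁻¹(Y) ∈ S}` is admissible with respect to
`N'_α = {Y ⊆ G/H : f⁻¹(Y) ∈ N_α}` (with `f : G → G/H` canonical). -/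
theorem quotient_admissible {G : Type u} [Group G] (H : Subgroup G) [H.Normal]
    (k : Cardinal.{u}) (hk : Cardinal.aleph0 ≤ k)
    (N : Ordinal.{u} → Set (Set G)) (hN : SmallSystem k N)
    (S : Set (Set G)) (hAlg : IsSetAlgebra S) (hkAdd : kAdditive k S)
    (hInv : GInvariant S) (hAdm : Admissible k S N)
    (hHS : (H : Set G) ∈ S)
    (hsat : ∀ E : Set G, (H : Set G) * E ∈ S) :
    Admissible k {Y : Set (G ⧸ H) | (QuotientGroup.mk : G → G ⧸ H) ⁻¹' Y ∈ S}
      (fun α => {Y : Set (G ⧸ H) | (QuotientGroup.mk : G → G ⧸ H) ⁻¹' Y ∈ N α}) := by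
  exact quotient_admissible_general _ (fun α hα E F hFE hE => hN.downward α hα E hE F hFE) hAlg
    (fun A _ => preimage_image_mk_eq_subgroup_mul H A ▸ hsat A) hAdm
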